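/- arXiv:1804.08174 — 3 statements merged into one kernel-verified Lean document; each statement's English description precedes it below -/
import Mathlib

section
/- Let M be an n×n row-stochastic matrix satisfying M_{ij} > 0 ⟺ M_{ji} > 0 for all i, j, with stationary probability distribution π with π_i > 0 for all i. If the chain is started at stationarity, p(0) = π, then for every t ≥ 1 the relative entropy of the path measure with respect to its time-reversal is exactly linear in t: Σ_{i_0,…,i_t : π_{i_0} M_{i_0 i_1}⋯M_{i_{t−1} i_t} > 0} π_{i_0} M_{i_0 i_1}⋯M_{i_{t−1} i_t} · log( π_{i_0} M_{i_0 i_1}⋯M_{i_{t−1} i_t} / ( π_{i_t} M_{i_t i_{t−1}}⋯M_{i_1 i_0} ) ) = t · Σ_{(i,j): M_{ij}>0} π_i M_{ij} log( M_{ij} / M_{ji} ). -/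
open Finset

lemma sum_snoc_aux {n t : ℕ} (F : (Fin (t + 2) → Fin n) → ℝ) :
    ∑ ω, F ω = ∑ ω : Fin (t + 1) → Fin n, ∑ j : Fin n,
      F (Fin.snoc (α := fun _ => Fin n) ω j) := by
  rw [← (Fin.snocEquiv (fun _ : Fin (t + 2) => Fin n)).sum_comp, Fintype.sum_prod_type,
    Finset.sum_comm]
  rfl

lemma path_snoc_aux {n t : ℕ} {β : Type*} (g : Fin n → Fin n → β)
    (ω : Fin (t + 1) → Fin n) (j : Fin n) (s : Fin t) :
    g ((Fin.snoc (α := fun _ => Fin n) ω j : Fin (t + 2) → Fin n) s.castSucc.castSucc)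
      ((Fin.snoc (α := fun _ => Fin n) ω j : Fin (t + 2) → Fin n) s.castSucc.succ)
    = g (ω s.castSucc) (ω s.succ) := by
  rw [Fin.succ_castSucc, Fin.snoc_castSucc, Fin.snoc_castSucc]

lemma snoc_zero_aux {n t : ℕ} (ω : Fin (t + 1) → Fin n) (j : Fin n) :
    (Fin.snoc (α := fun _ => Fin n) ω j : Fin (t + 2) → Fin n) 0 = ω 0 := by
  rw [← Fin.castSucc_zero, Fin.snoc_castSucc]

/-- Weight of a path. -/
noncomputable def pathW {n : ℕ} (M : Matrix (Fin n) (Fin n) ℝ) (π : Fin n → ℝ) (t : ℕ)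
    (ω : Fin (t + 1) → Fin n) : ℝ := π (ω 0) * ∏ s : Fin t, M (ω s.castSucc) (ω s.succ)

lemma pathW_snoc {n t : ℕ} (M : Matrix (Fin n) (Fin n) ℝ) (π : Fin n → ℝ)
    (ω : Fin (t + 1) → Fin n) (j : Fin n) :
    pathW M π (t + 1) (Fin.snoc (α := fun _ => Fin n) ω j)
      = pathW M π t ω * M (ω (Fin.last t)) j := by
  unfold pathW
  rw [Fin.prod_univ_castSucc, snoc_zero_aux]
  simp only [path_snoc_aux (fun a b => M a b)]
  rw [Fin.succ_last, Fin.snoc_castSucc, Fin.snoc_last, mul_assoc]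

lemma sum_last_aux {n : ℕ} (M : Matrix (Fin n) (Fin n) ℝ) (π : Fin n → ℝ)
    (hπstat : ∀ j, ∑ i, π i * M i j = π j) (t : ℕ) : ∀ (f : Fin n → ℝ),
    ∑ ω, pathW M π t ω * f (ω (Fin.last t)) = ∑ i, π i * f i := by
  induction t with
  | zero =>
    intro f
    rw [← (Equiv.funUnique (Fin 1) (Fin n)).symm.sum_comp]
    simp [pathW]
  | succ t ih =>
    intro f
    rw [sum_snoc_aux]
    simp only [pathW_snoc, Fin.snoc_last, mul_assoc, ← Finset.mul_sum]
    rw [ih (fun i => ∑ j, M i j * f j)]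
    simp only [Finset.mul_sum]
    rw [Finset.sum_comm]
    refine Finset.sum_congr rfl fun j _ => ?_
    rw [← hπstat j, Finset.sum_mul]
    simp only [mul_assoc]

lemma sum_first_aux {n : ℕ} (M : Matrix (Fin n) (Fin n) ℝ) (π : Fin n → ℝ)
    (hM1 : ∀ i, ∑ j, M i j = 1) (f : Fin n → ℝ) (t : ℕ) :
    ∑ ω, pathW M π t ω * f (ω 0) = ∑ i, π i * f i := by
  induction t with
  | zero =>
    rw [← (Equiv.funUnique (Fin 1) (Fin n)).symm.sum_comp]
    simp [pathW]
  | succ t ih =>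
    rw [sum_snoc_aux, ← ih]
    refine Finset.sum_congr rfl fun ω _ => ?_
    simp only [pathW_snoc, snoc_zero_aux]
    rw [← Finset.sum_mul, ← Finset.mul_sum, hM1, mul_one]

lemma sum_edges_aux {n : ℕ} (M : Matrix (Fin n) (Fin n) ℝ) (π : Fin n → ℝ)
    (hM1 : ∀ i, ∑ j, M i j = 1)
    (hπstat : ∀ j, ∑ i, π i * M i j = π j) (g : Fin n → Fin n → ℝ) (t : ℕ) :
    ∑ ω, pathW M π t ω * ∑ s : Fin t, g (ω s.castSucc) (ω s.succ)
      = t * ∑ i, ∑ j, π i * M i j * g i j := by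
  induction t with
  | zero => simp
  | succ t ih =>
    rw [sum_snoc_aux]
    have h2 := sum_last_aux M π hπstat t (fun i => ∑ j, M i j * g i j)
    have h3 : ∑ i, ∑ j, π i * M i j * g i j = ∑ i, π i * ∑ j, M i j * g i j := by
      simp only [Finset.mul_sum, mul_assoc]
    push_cast
    rw [add_mul, one_mul, ← ih, h3, ← h2, ← Finset.sum_add_distrib]
    refine Finset.sum_congr rfl fun ω _ => ?_
    simp only [pathW_snoc, Fin.sum_univ_castSucc (n := t), path_snoc_aux g]
    simp only [Fin.succ_last, Fin.snoc_castSucc, Fin.snoc_last, mul_add, Finset.sum_add_distrib]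
    congr 1
    · rw [← Finset.sum_mul, ← Finset.mul_sum, hM1, mul_one]
    · rw [Finset.mul_sum]
      simp only [mul_assoc]

/-- At stationarity, the relative entropy of the path measure with respect to its time
reversal is exactly linear in t, with slope the entropy production rate. -/
theorem stationary_path_relative_entropy_linear (n : ℕ)
    (M : Matrix (Fin n) (Fin n) ℝ)
    (hM0 : ∀ i j, 0 ≤ M i j) (hM1 : ∀ i, ∑ j, M i j = 1)
    (hsym : ∀ i j, 0 < M i j ↔ 0 < M j i)
    (π : Fin n → ℝ) (hπpos : ∀ i, 0 < π i) (hπ1 : ∑ i, π i = 1)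
    (hπstat : ∀ j, ∑ i, π i * M i j = π j)
    (w wrev : (t : ℕ) → (Fin (t + 1) → Fin n) → ℝ)
    (hw : ∀ t ω, w t ω = π (ω 0) * ∏ s : Fin t, M (ω s.castSucc) (ω s.succ))
    (hwrev : ∀ t ω, wrev t ω =
      π (ω (Fin.last t)) * ∏ s : Fin t, M (ω s.succ) (ω s.castSucc)) :
    ∀ t : ℕ, 1 ≤ t →
      (∑ ω : Fin (t + 1) → Fin n,
        if 0 < w t ω then w t ω * Real.log (w t ω / wrev t ω) else 0)
      = (t : ℝ) * ∑ i, ∑ j,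
          if 0 < M i j then π i * M i j * Real.log (M i j / M j i) else 0 := by
  intro t _
  have hL := sum_last_aux M π hπstat t (fun i => Real.log (π i))
  have hF := sum_first_aux M π hM1 (fun i => Real.log (π i)) t
  have hE := sum_edges_aux M π hM1 hπstat (fun i j => Real.log (M i j / M j i)) t
  have hR : (∑ i, ∑ j, if 0 < M i j then π i * M i j * Real.log (M i j / M j i) else 0)
      = ∑ i, ∑ j, π i * M i j * Real.log (M i j / M j i) := by
    refine Finset.sum_congr rfl fun i _ => Finset.sum_congr rfl fun j _ => ?_
    split_ifs with h
    · rfl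
    · have : M i j = 0 := le_antisymm (not_lt.mp h) (hM0 i j)
      simp [this]
  have key : ∀ a b c : ℝ, b = c → a = a + (b - c) := fun a b c h => by rw [h]; ring
  rw [hR, ← hE]
  refine Eq.trans ?_ (key _ _ _ (hF.trans hL.symm)).symm
  rw [← Finset.sum_sub_distrib, ← Finset.sum_add_distrib]
  refine Finset.sum_congr rfl fun ω _ => ?_
  have hwp : w t ω = pathW M π t ω := hw t ω
  rw [← hwp]
  split_ifs with h
  · have hprod : ∏ s : Fin t, M (ω s.castSucc) (ω s.succ) ≠ 0 := by
      intro h0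
      rw [hw, h0, mul_zero] at h
      exact lt_irrefl _ h
    have hpos : ∀ s : Fin t, 0 < M (ω s.castSucc) (ω s.succ) := fun s =>
      lt_of_le_of_ne (hM0 _ _) (Ne.symm (Finset.prod_ne_zero_iff.mp hprod s (Finset.mem_univ _)))
    have hpos' : ∀ s : Fin t, 0 < M (ω s.succ) (ω s.castSucc) := fun s => (hsym _ _).1 (hpos s)
    have hprod' : ∏ s : Fin t, M (ω s.succ) (ω s.castSucc) ≠ 0 :=
      Finset.prod_ne_zero_iff.mpr fun s _ => (hpos' s).ne'
    have e : Real.log (w t ω / wrev t ω) = Real.log (π (ω 0)) - Real.log (π (ω (Fin.last t)))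
        + ∑ s : Fin t, Real.log (M (ω s.castSucc) (ω s.succ) / M (ω s.succ) (ω s.castSucc)) := by
      rw [hw, hwrev, Real.log_div (mul_ne_zero (hπpos _).ne' hprod)
        (mul_ne_zero (hπpos _).ne' hprod'), Real.log_mul (hπpos _).ne' hprod,
        Real.log_mul (hπpos _).ne' hprod', Real.log_prod (fun s _ => (hpos s).ne'),
        Real.log_prod (fun s _ => (hpos' s).ne')]
      simp only [fun s => Real.log_div (hpos s).ne' (hpos' s).ne', Finset.sum_sub_distrib]
      ring
    rw [e]
    ring
  · have h0 : 0 ≤ w t ω := by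
      rw [hw]
      exact mul_nonneg (hπpos _).le (Finset.prod_nonneg fun s _ => hM0 _ _)
    have : w t ω = 0 := le_antisymm (not_lt.mp h) h0
    simp [this]
end

section
/- Let M be an n×n row-stochastic matrix and let Q be the maximum entropy RDS measure on maps α : {1,…,n} → {1,…,n}, Q(α) = Π_i M_{i, α(i)}. A cycle c is a pair (S, σ) where S ⊆ {1,…,n} is nonempty and σ is a cyclic permutation of S; write A(α) = c if Per(α) = S and α agrees with σ on S. Then Q(α : A(α) = c) = ( Π_{x ∈ S} M_{x, σ(x)} ) · e(𝓕_S), where e(𝓕_S) is the total weight of directed forests rooted at S; consequently, if M is irreducible, the cycle weight w_c := ( Π_{x ∈ S} M_{x, σ(x)} ) · e(𝓕_S) / Σ_{k} e(𝒯_k) satisfies w_c = Q(α : A(α) = c) / E_Q[‖A(α)‖]. -/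
open Finset
open scoped Classical

/-- Reaching `S` only depends on the values of the map off `S`. -/
lemma hit_congr {n : ℕ} {S : Finset (Fin n)} {α β : Fin n → Fin n}
    (h : ∀ x ∉ S, α x = β x) (k : ℕ) :
    ∀ j, α^[k] j ∈ S → ∃ k', β^[k'] j ∈ S := by
  induction k with
  | zero => intro j hj; exact ⟨0, hj⟩
  | succ k ih =>
    intro j hj
    by_cases hjS : j ∈ S
    · exact ⟨0, hjS⟩
    · rw [Function.iterate_succ_apply, h j hjS] at hj
      obtain ⟨k', hk'⟩ := ih _ hj
      exact ⟨k' + 1, by rwa [Function.iterate_succ_apply]⟩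

/-- Every state reaches a periodic point. -/
lemma reach_periodic {n : ℕ} (α : Fin n → Fin n) (j : Fin n) :
    ∃ m, ∃ k, 1 ≤ k ∧ α^[k] (α^[m] j) = α^[m] j := by
  obtain ⟨a, b, hab, h⟩ := Finite.exists_ne_map_eq_of_infinite (fun m : ℕ => α^[m] j)
  wlog hlt : a < b generalizing a b
  · exact this b a hab.symm h.symm (by omega)
  refine ⟨a, b - a, by omega, ?_⟩
  rw [← Function.iterate_add_apply, Nat.sub_add_cancel hlt.le]
  exact h.symm

lemma periodic_mem_of_hit {n : ℕ} {α : Fin n → Fin n} {S : Finset (Fin n)}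
    (hinv : ∀ x ∈ S, α x ∈ S) {x : Fin n} {k m : ℕ} (hk : 1 ≤ k) (hx : α^[k] x = x)
    (hm : α^[m] x ∈ S) : x ∈ S := by
  have hit : ∀ r, ∀ y ∈ S, α^[r] y ∈ S := by
    intro r
    induction r with
    | zero => intro y hy; exact hy
    | succ r ih => intro y hy; rw [Function.iterate_succ_apply]; exact ih _ (hinv y hy)
  have h1 : α^[k * m] x = x := by
    rw [Function.iterate_mul]
    exact Function.iterate_fixed hx m
  have h2 : m ≤ k * m := Nat.le_mul_of_pos_left m hk
  have h3 := hit (k * m - m) _ hm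
  rw [← Function.iterate_add_apply, Nat.sub_add_cancel h2, h1] at h3
  exact h3

lemma forest_iff {n : ℕ} {S : Finset (Fin n)} {σ : Equiv.Perm (Fin n)}
    (hfix : ∀ x ∉ S, σ x = x)
    (htrans : ∀ x ∈ S, ∀ y ∈ S, ∃ k, (⇑σ)^[k] x = y)
    {α : Fin n → Fin n} (hα : ∀ x ∈ S, α x = σ x) :
    (Finset.univ.filter fun x => ∃ k, 1 ≤ k ∧ α^[k] x = x) = S ↔
      ∀ j, ∃ k, α^[k] j ∈ S := by
  have hσS : ∀ x ∈ S, σ x ∈ S := by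
    intro x hx
    by_contra hc
    have := σ.injective (hfix _ hc)
    exact hc (this.symm ▸ hx)
  constructor
  · intro h j
    obtain ⟨m, hm⟩ := reach_periodic α j
    refine ⟨m, ?_⟩
    rw [← h]
    simpa using hm
  · intro h
    ext x
    simp only [Finset.mem_filter, Finset.mem_univ, true_and]
    constructor
    · rintro ⟨k, hk, hx⟩
      obtain ⟨m, hm⟩ := h x
      exact periodic_mem_of_hit (fun y hy => by rw [hα y hy]; exact hσS y hy) hk hx hm
    · intro hx
      have hit : ∀ r, ∀ y ∈ S, α^[r] y = (⇑σ)^[r] y := by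
        intro r
        induction r with
        | zero => intro y hy; rfl
        | succ r ih =>
          intro y hy
          rw [Function.iterate_succ_apply, Function.iterate_succ_apply, hα y hy]
          exact ih _ (hσS y hy)
      obtain ⟨k, hk⟩ := htrans _ (hσS x hx) x hx
      refine ⟨k + 1, by omega, ?_⟩
      rw [hit _ _ hx, Function.iterate_succ_apply, hk]

lemma norm_eq_card {n : ℕ} (α : Fin n → Fin n) (P : Finset (Fin n))
    (hP : P = Finset.univ.filter fun x => ∃ k, 1 ≤ k ∧ α^[k] x = x) :
    (if (∀ x ∈ P, ∀ y ∈ P, ∃ k, α^[k] x = y) then (P.card : ℝ) else 0)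
      = ∑ i, if (∀ j, ∃ k, α^[k] j = i) then (1 : ℝ) else 0 := by
  rw [Finset.sum_boole]
  have hmem : ∀ x, x ∈ P ↔ ∃ k, 1 ≤ k ∧ α^[k] x = x := by simp [hP]
  have hRP : ∀ i, (∀ j, ∃ k, α^[k] j = i) → i ∈ P := by
    intro i hi
    obtain ⟨k, hk⟩ := hi (α i)
    exact (hmem i).2 ⟨k + 1, by omega, hk⟩
  split_ifs with h
  · congr 2
    ext i
    simp only [Finset.mem_filter, Finset.mem_univ, true_and]
    refine ⟨fun hi j => ?_, hRP i⟩
    obtain ⟨m, hm⟩ := reach_periodic α j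
    obtain ⟨k, hk⟩ := h _ ((hmem _).2 hm) i hi
    exact ⟨k + m, by rw [Function.iterate_add_apply, hk]⟩
  · symm
    rw [Nat.cast_eq_zero, Finset.card_eq_zero, Finset.filter_eq_empty_iff]
    intro i _ hi
    apply h
    intro x hx y hy
    obtain ⟨a, ha⟩ := hi x
    obtain ⟨b, hb⟩ := hi y
    have : y ∈ Finset.univ.filter (fun z => ∃ m, α^[m] i = z) := by
      refine periodic_mem_of_hit (α := α) ?_ ((hmem y).1 hy).choose_spec.1
        ((hmem y).1 hy).choose_spec.2 (m := b) ?_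
      · intro z hz
        simp only [Finset.mem_filter, Finset.mem_univ, true_and] at hz ⊢
        obtain ⟨m, rfl⟩ := hz
        exact ⟨m + 1, Function.iterate_succ_apply' _ _ _⟩
      · simp only [Finset.mem_filter, Finset.mem_univ, true_and]
        exact ⟨0, hb.symm⟩
    simp only [Finset.mem_filter, Finset.mem_univ, true_and] at this
    obtain ⟨m, hm⟩ := this
    exact ⟨m + a, by rw [Function.iterate_add_apply, ha, hm]⟩

lemma tree_sum {n : ℕ} (M : Matrix (Fin n) (Fin n) ℝ) (hM1 : ∀ i, ∑ j, M i j = 1)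
    (i : Fin n) :
    (∑ τ : Fin n → Fin n,
      if (τ i = i ∧ ∀ j, ∃ k, τ^[k] j = i)
        then ∏ j ∈ Finset.univ.erase i, M j (τ j) else 0)
    = ∑ α : Fin n → Fin n, if (∀ j, ∃ k, α^[k] j = i) then ∏ j, M j (α j) else 0 := by
  have key : ∀ (α : Fin n → Fin n) (y : Fin n), (∀ j, ∃ k, α^[k] j = i) →
      ∀ j, ∃ k, (Function.update α i y)^[k] j = i := by
    intro α y h j
    obtain ⟨k, hk⟩ := h j
    have := hit_congr (S := {i}) (α := α) (β := Function.update α i y)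
      (fun x hx => by
        rw [Function.update_of_ne (by simpa using hx)]) k j (by simpa using hk)
    simpa using this
  rw [← Finset.sum_filter, ← Finset.sum_filter]
  have h1 : ∀ τ ∈ Finset.univ.filter
      (fun τ : Fin n → Fin n => τ i = i ∧ ∀ j, ∃ k, τ^[k] j = i),
      ∏ j ∈ Finset.univ.erase i, M j (τ j)
        = ∑ y, M i y * ∏ j ∈ Finset.univ.erase i, M j (τ j) := by
    intro τ _
    rw [← Finset.sum_mul, hM1, one_mul]
  rw [Finset.sum_congr rfl h1, ← Finset.sum_product']
  refine Finset.sum_nbij' (fun p => Function.update p.1 i p.2)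
    (fun α => (Function.update α i i, α i)) ?_ ?_ ?_ ?_ ?_
  · rintro ⟨τ, y⟩ h
    simp only [Finset.mem_product, Finset.mem_filter, Finset.mem_univ, true_and, and_true] at h ⊢
    exact key τ y h.2
  · intro α h
    simp only [Finset.mem_product, Finset.mem_filter, Finset.mem_univ, true_and, and_true] at h ⊢
    exact ⟨by simp, key α i h⟩
  · rintro ⟨τ, y⟩ h
    simp only [Finset.mem_product, Finset.mem_filter, Finset.mem_univ, true_and, and_true] at h
    ext1
    · funext x
      by_cases hx : x = i
      · subst hx; simp [h.1]
      · simp [hx]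
    · simp
  · intro α h
    simp
  · rintro ⟨τ, y⟩ h
    rw [← Finset.mul_prod_erase Finset.univ _ (Finset.mem_univ i)]
    congr 1
    · simp
    · refine Finset.prod_congr rfl fun j hj => ?_
      rw [Function.update_of_ne (Finset.ne_of_mem_erase hj)]

lemma cycle_sum {n : ℕ} (M : Matrix (Fin n) (Fin n) ℝ)
    (S : Finset (Fin n)) (σ : Equiv.Perm (Fin n)) (hfix : ∀ x ∉ S, σ x = x)
    (htrans : ∀ x ∈ S, ∀ y ∈ S, ∃ k, (⇑σ)^[k] x = y) :
    (∑ α : Fin n → Fin n,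
      if ((Finset.univ.filter fun x => ∃ k, 1 ≤ k ∧ α^[k] x = x) = S ∧ ∀ x ∈ S, α x = σ x)
        then ∏ i, M i (α i) else 0)
    = (∏ x ∈ S, M x (σ x)) * ∑ τ : Fin n → Fin n,
      if ((∀ s ∈ S, τ s = s) ∧ ∀ j, ∃ k, τ^[k] j ∈ S)
        then ∏ j ∈ Sᶜ, M j (τ j) else 0 := by
  rw [← Finset.sum_filter, ← Finset.sum_filter, Finset.mul_sum]
  refine Finset.sum_nbij' (fun α => S.piecewise id α) (fun τ => S.piecewise σ τ) ?_ ?_ ?_ ?_ ?_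
  · intro α h
    rw [Finset.mem_filter] at h ⊢
    obtain ⟨-, h1, h2⟩ := h
    refine ⟨Finset.mem_univ _, fun s hs => by simp [hs], fun j => ?_⟩
    obtain ⟨k, hk⟩ := (forest_iff hfix htrans h2).1 h1 j
    exact hit_congr (fun x hx => by simp [hx]) k j hk
  · intro τ h
    rw [Finset.mem_filter] at h ⊢
    obtain ⟨-, h1, h2⟩ := h
    have h3 : ∀ x ∈ S, S.piecewise σ τ x = σ x := fun x hx => by simp [hx]
    refine ⟨Finset.mem_univ _, (forest_iff hfix htrans h3).2 fun j => ?_, h3⟩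
    obtain ⟨k, hk⟩ := h2 j
    exact hit_congr (fun x hx => by simp [hx]) k j hk
  · intro α h
    rw [Finset.mem_filter] at h
    funext x
    by_cases hx : x ∈ S
    · simp [hx, h.2.2 x hx]
    · simp [hx]
  · intro τ h
    rw [Finset.mem_filter] at h
    funext x
    by_cases hx : x ∈ S
    · simp [hx, h.2.1 x hx]
    · simp [hx]
  · intro α h
    rw [Finset.mem_filter] at h
    rw [← Finset.prod_mul_prod_compl S]
    congr 1
    · exact Finset.prod_congr rfl fun x hx => by rw [h.2.2 x hx]
    · refine Finset.prod_congr rfl fun x hx => ?_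
      rw [Finset.piecewise_eq_of_notMem _ _ _ (Finset.mem_compl.1 hx)]

/-- For the maximum entropy RDS measure Q(α) = Π_i M_{i,α(i)} and a cycle c = (S,σ),
Q(α : A(α) = c) = (Π_{x∈S} M_{x,σ(x)}) · e(𝓕_S); consequently, if M is irreducible, the
cycle weight w_c = (Π_{x∈S} M_{x,σ(x)}) e(𝓕_S) / Σ_k e(𝒯_k) equals
Q(α : A(α) = c) / E_Q[‖A(α)‖]. -/
theorem cycle_weight_via_maximum_entropy_RDS (n : ℕ)
    (M : Matrix (Fin n) (Fin n) ℝ)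
    (hM0 : ∀ i j, 0 ≤ M i j) (hM1 : ∀ i, ∑ j, M i j = 1)
    (Q : (Fin n → Fin n) → ℝ) (hQ : ∀ α, Q α = ∏ i, M i (α i))
    (Per : (Fin n → Fin n) → Finset (Fin n))
    (hPer : ∀ α, Per α = Finset.univ.filter fun x => ∃ k, 1 ≤ k ∧ α^[k] x = x)
    (single : (Fin n → Fin n) → Prop)
    (hsingle : ∀ α, single α ↔ ∀ x ∈ Per α, ∀ y ∈ Per α, ∃ k, α^[k] x = y)
    (normA : (Fin n → Fin n) → ℝ)
    (hnormA : ∀ α, normA α = if single α then ((Per α).card : ℝ) else 0)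
    (eT : Fin n → ℝ)
    (heT : ∀ i, eT i = ∑ τ : Fin n → Fin n,
      if (τ i = i ∧ ∀ j, ∃ k, τ^[k] j = i)
        then ∏ j ∈ Finset.univ.erase i, M j (τ j) else 0)
    (eF : Finset (Fin n) → ℝ)
    (heF : ∀ S, eF S = ∑ τ : Fin n → Fin n,
      if ((∀ s ∈ S, τ s = s) ∧ ∀ j, ∃ k, τ^[k] j ∈ S)
        then ∏ j ∈ Sᶜ, M j (τ j) else 0)
    -- the cycle c = (S, σ): S nonempty, σ a permutation fixing Sᶜ and cyclic on S
    (S : Finset (Fin n)) (σ : Equiv.Perm (Fin n))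
    (hSne : S.Nonempty) (hfix : ∀ x ∉ S, σ x = x)
    (htrans : ∀ x ∈ S, ∀ y ∈ S, ∃ k, (⇑σ)^[k] x = y)
    (QA : ℝ)
    (hQA : QA = ∑ α : Fin n → Fin n,
      if (Per α = S ∧ ∀ x ∈ S, α x = σ x) then Q α else 0) :
    QA = (∏ x ∈ S, M x (σ x)) * eF S ∧
    ((∀ i j, ∃ k, 1 ≤ k ∧ 0 < (M ^ k) i j) →
      (∏ x ∈ S, M x (σ x)) * eF S / (∑ k, eT k)
        = QA / ∑ α : Fin n → Fin n, Q α * normA α) := by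
  have hfirst : QA = (∏ x ∈ S, M x (σ x)) * eF S := by
    rw [hQA, heF, ← cycle_sum M S σ hfix htrans]
    refine Finset.sum_congr rfl fun α _ => ?_
    rw [hPer, hQ]
  refine ⟨hfirst, fun _ => ?_⟩
  have hsum : ∑ k, eT k = ∑ α : Fin n → Fin n, Q α * normA α := by
    have h1 : ∀ k, eT k = ∑ α : Fin n → Fin n,
        if (∀ j, ∃ m, α^[m] j = k) then Q α else 0 := by
      intro k
      rw [heT, tree_sum M hM1 k]
      simp only [hQ]
    rw [Finset.sum_congr rfl fun k _ => h1 k, Finset.sum_comm]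
    refine Finset.sum_congr rfl fun α _ => ?_
    have h2 : normA α = ∑ i, if (∀ j, ∃ k, α^[k] j = i) then (1 : ℝ) else 0 := by
      rw [← norm_eq_card α (Per α) (hPer α), hnormA]
      simp only [hsingle]
    rw [h2, Finset.mul_sum]
    exact Finset.sum_congr rfl fun i _ => by split_ifs <;> simp
  rw [hfirst, hsum]
end

section
/- Let M be an irreducible n×n row-stochastic matrix with stationary distribution π, and let Q be the maximum entropy RDS measure on maps α : {1,…,n} → {1,…,n}, Q(α) = Π_i M_{i, α(i)}. Then for every state i, Σ_{cycles c = (S,σ) with i ∈ S} w_c = π_i, where w_c = Q(α : A(α) = c) / E_Q[‖A(α)‖]; equivalently, Q(α : α has a single attractor and i ∈ Per(α)) = π_i · E_Q[‖A(α)‖]. -/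
open Finset
open scoped Classical

/-- every point eventually reaches `i` -/
def Rch {n : ℕ} (α : Fin n → Fin n) (i : Fin n) : Prop := ∀ x, ∃ k, α^[k] x = i

lemma Rch.per {n : ℕ} {α : Fin n → Fin n} {i : Fin n} (h : Rch α i) :
    ∃ k, 1 ≤ k ∧ α^[k] i = i := by
  obtain ⟨k, hk⟩ := h (α i)
  exact ⟨k + 1, by omega, by rwa [Function.iterate_succ_apply]⟩

lemma per_iter_mul {n : ℕ} {α : Fin n → Fin n} {y : Fin n} {p : ℕ} (h : α^[p] y = y) (m : ℕ) :
    α^[p * m] y = y := by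
  rw [Function.iterate_mul]
  exact Function.iterate_fixed h m

lemma per_back {n : ℕ} {α : Fin n → Fin n} {y z : Fin n} {k : ℕ}
    (hp : ∃ p, 1 ≤ p ∧ α^[p] y = y) (h : α^[k] y = z) : ∃ l, α^[l] z = y := by
  obtain ⟨p, hp1, hp⟩ := hp
  refine ⟨p * k - k, ?_⟩
  rw [← h, ← Function.iterate_add_apply]
  have : k ≤ p * k := Nat.le_mul_of_pos_left k hp1
  rw [Nat.sub_add_cancel this]
  exact per_iter_mul hp k

lemma per_inj {n : ℕ} {α : Fin n → Fin n} {x y : Fin n}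
    (hx : ∃ p, 1 ≤ p ∧ α^[p] x = x) (hy : ∃ p, 1 ≤ p ∧ α^[p] y = y) (h : α x = α y) : x = y := by
  obtain ⟨p, hp1, hp⟩ := hx
  obtain ⟨q, hq1, hq⟩ := hy
  have h1 := per_iter_mul hp q
  have h2 := per_iter_mul hq p
  have hpos : 0 < p * q := Nat.mul_pos hp1 hq1
  obtain ⟨m, hm⟩ : ∃ m, p * q = m + 1 := ⟨p * q - 1, by omega⟩
  rw [hm, Function.iterate_succ_apply] at h1
  rw [Nat.mul_comm q p, hm, Function.iterate_succ_apply] at h2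
  rw [← h1, ← h2, h]

lemma per_map {n : ℕ} {α : Fin n → Fin n} {x : Fin n}
    (hx : ∃ p, 1 ≤ p ∧ α^[p] x = x) : ∃ p, 1 ≤ p ∧ α^[p] (α x) = α x := by
  obtain ⟨p, hp1, hp⟩ := hx
  exact ⟨p, hp1, by rw [← Function.iterate_succ_apply, Function.iterate_succ_apply', hp]⟩

lemma exists_per {n : ℕ} (α : Fin n → Fin n) (x : Fin n) :
    ∃ a p, 1 ≤ p ∧ α^[p] (α^[a] x) = α^[a] x := by
  obtain ⟨a, b, hab, h⟩ := Finite.exists_ne_map_eq_of_infinite (fun k : ℕ => α^[k] x)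
  rcases Nat.lt_or_gt_of_ne hab with hl | hl
  · refine ⟨a, b - a, by omega, ?_⟩
    rw [← Function.iterate_add_apply, Nat.sub_add_cancel hl.le, h]
  · refine ⟨b, a - b, by omega, ?_⟩
    rw [← Function.iterate_add_apply, Nat.sub_add_cancel hl.le, h]

lemma Rch_iff {n : ℕ} (α : Fin n → Fin n) (i : Fin n) :
    Rch α i ↔ (∀ x, (∃ k, 1 ≤ k ∧ α^[k] x = x) → ∀ y, (∃ k, 1 ≤ k ∧ α^[k] y = y) →
      ∃ k, α^[k] x = y) ∧ (∃ k, 1 ≤ k ∧ α^[k] i = i) := by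
  constructor
  · intro h
    refine ⟨fun x _ y hy => ?_, h.per⟩
    obtain ⟨k, hk⟩ := h x
    obtain ⟨l, hl⟩ := h y
    obtain ⟨m, hm⟩ := per_back hy hl
    exact ⟨m + k, by rw [Function.iterate_add_apply, hk, hm]⟩
  · rintro ⟨h, hi⟩ x
    obtain ⟨a, p, hp⟩ := exists_per α x
    obtain ⟨k, hk⟩ := h _ ⟨p, hp⟩ i hi
    exact ⟨k + a, by rw [Function.iterate_add_apply, hk]⟩

lemma Rch_congr_aux {n : ℕ} {α β : Fin n → Fin n} {i : Fin n} (h : ∀ x, x ≠ i → α x = β x)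
    (k : ℕ) : ∀ x, α^[k] x = i → ∃ l, β^[l] x = i := by
  induction k with
  | zero => intro x hx; exact ⟨0, hx⟩
  | succ k ih =>
    intro x hx
    by_cases hxi : x = i
    · exact ⟨0, hxi⟩
    · rw [Function.iterate_succ_apply, h x hxi] at hx
      obtain ⟨l, hl⟩ := ih _ hx
      exact ⟨l + 1, by rwa [Function.iterate_succ_apply]⟩

lemma Rch_congr {n : ℕ} {α β : Fin n → Fin n} {i : Fin n} (h : ∀ x, x ≠ i → α x = β x) :
    Rch α i ↔ Rch β i := by
  constructor
  · intro H x
    obtain ⟨k, hk⟩ := H x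
    exact Rch_congr_aux h k x hk
  · intro H x
    obtain ⟨k, hk⟩ := H x
    exact Rch_congr_aux (fun x hx => (h x hx).symm) k x hk

lemma split_sum {n : ℕ} (i : Fin n) (g : (Fin n → Fin n) → ℝ)
    (hg : ∀ α β : Fin n → Fin n, (∀ x, x ≠ i → α x = β x) → g α = g β) :
    ∃ G : ℝ, ∀ h : Fin n → ℝ, ∑ α, h (α i) * g α = (∑ l, h l) * G := by
  refine ⟨∑ b : {x // x ≠ i} → Fin n, g ((Equiv.funSplitAt i (Fin n)).symm (i, b)), fun h => ?_⟩
  rw [← Equiv.sum_comp (Equiv.funSplitAt i (Fin n)).symm, Fintype.sum_prod_type,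
    Finset.sum_mul_sum]
  refine Finset.sum_congr rfl fun l _ => Finset.sum_congr rfl fun b _ => ?_
  congr 1
  · simp [Equiv.funSplitAt, Equiv.piSplitAt]
  · apply hg
    intro x hx
    simp [Equiv.funSplitAt, Equiv.piSplitAt, hx]

/-- tree weights -/
noncomputable def uw {n : ℕ} (M : Matrix (Fin n) (Fin n) ℝ) (i : Fin n) : ℝ :=
  ∑ α : Fin n → Fin n, if Rch α i then ∏ x, M x (α x) else 0

lemma uw_mul {n : ℕ} (M : Matrix (Fin n) (Fin n) ℝ) (hM1 : ∀ i, ∑ j, M i j = 1) (i j : Fin n) :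
    uw M i * M i j =
      ∑ α : Fin n → Fin n, if Rch α i ∧ α i = j then ∏ x, M x (α x) else 0 := by
  obtain ⟨G, hG⟩ := split_sum i
    (fun α => if Rch α i then ∏ x ∈ univ.erase i, M x (α x) else 0) (by
      intro α β h
      rw [if_congr (Rch_congr h) rfl rfl]
      congr 1
      refine Finset.prod_congr rfl fun x hx => ?_
      rw [h x (Finset.ne_of_mem_erase hx)])
  have e : ∀ α : Fin n → Fin n, ∏ x, M x (α x) = M i (α i) * ∏ x ∈ univ.erase i, M x (α x) :=
    fun α => (Finset.mul_prod_erase univ (fun x => M x (α x)) (Finset.mem_univ i)).symm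
  have h1 := hG (fun l => M i l)
  have h2 := hG (fun l => if l = j then M i l else 0)
  have h3 : uw M i = G := by
    rw [hM1, one_mul] at h1
    rw [← h1, uw]
    refine Finset.sum_congr rfl fun α _ => ?_
    rw [e]; split_ifs <;> simp
  rw [Finset.sum_ite_eq' univ j, if_pos (Finset.mem_univ j)] at h2
  rw [h3, mul_comm, ← h2]
  refine Finset.sum_congr rfl fun α _ => ?_
  rw [e]
  by_cases ha : Rch α i <;> by_cases hb : α i = j <;> simp [ha, hb]

lemma uw_stat {n : ℕ} (M : Matrix (Fin n) (Fin n) ℝ) (hM1 : ∀ i, ∑ j, M i j = 1) (j : Fin n) :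
    ∑ i, uw M i * M i j = uw M j := by
  simp_rw [uw_mul M hM1]
  rw [Finset.sum_comm, uw]
  refine Finset.sum_congr rfl fun α _ => ?_
  by_cases h : Rch α j
  · rw [if_pos h]
    obtain ⟨k, hk1, hk⟩ := h.per
    obtain ⟨m, rfl⟩ : ∃ m, k = m + 1 := ⟨k - 1, by omega⟩
    rw [Function.iterate_succ_apply'] at hk
    have hR : Rch α (α^[m] j) := by
      intro x
      obtain ⟨l, hl⟩ := h x
      exact ⟨m + l, by rw [Function.iterate_add_apply, hl]⟩
    rw [Finset.sum_eq_single (α^[m] j)]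
    · rw [if_pos ⟨hR, hk⟩]
    · intro b _ hb
      rw [if_neg]
      rintro ⟨hb1, hb2⟩
      exact hb (per_inj hb1.per hR.per (hb2.trans hk.symm))
    · simp
  · rw [if_neg h]
    refine Finset.sum_eq_zero fun i _ => ?_
    rw [if_neg]
    rintro ⟨h1, h2⟩
    apply h
    intro x
    obtain ⟨k, hk⟩ := h1 x
    exact ⟨k + 1, by rw [Function.iterate_succ_apply', hk, h2]⟩

lemma pow_nn {n : ℕ} (M : Matrix (Fin n) (Fin n) ℝ) (hM0 : ∀ i j, 0 ≤ M i j) (k : ℕ) :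
    ∀ i j, 0 ≤ (M ^ k) i j := by
  induction k with
  | zero => intro i j; rw [pow_zero, Matrix.one_apply]; split_ifs <;> norm_num
  | succ k ih =>
    intro i j
    rw [pow_succ, Matrix.mul_apply]
    exact Finset.sum_nonneg fun x _ => mul_nonneg (ih _ _) (hM0 _ _)

lemma stat_pow {n : ℕ} (M : Matrix (Fin n) (Fin n) ℝ) (v : Fin n → ℝ)
    (hv : ∀ j, ∑ i, v i * M i j = v j) (k : ℕ) : ∀ j, ∑ i, v i * (M ^ k) i j = v j := by
  have h : Matrix.vecMul v M = v := by ext j; simpa [Matrix.vecMul, dotProduct] using hv j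
  have h2 : Matrix.vecMul v (M ^ k) = v := by
    induction k with
    | zero => simp
    | succ k ih => rw [pow_succ, ← Matrix.vecMul_vecMul, ih, h]
  intro j
  simpa [Matrix.vecMul, dotProduct] using congrFun h2 j

lemma stat_zero {n : ℕ} (M : Matrix (Fin n) (Fin n) ℝ) (hM0 : ∀ i j, 0 ≤ M i j)
    (hirr : ∀ i j, ∃ k, 1 ≤ k ∧ 0 < (M ^ k) i j) (v : Fin n → ℝ) (hv0 : ∀ i, 0 ≤ v i)
    (hv : ∀ j, ∑ i, v i * M i j = v j) (i : Fin n) (hi : v i = 0) (j : Fin n) : v j = 0 := by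
  obtain ⟨k, _, hk⟩ := hirr j i
  have h := stat_pow M v hv k i
  rw [hi, Finset.sum_eq_zero_iff_of_nonneg
    (fun x _ => mul_nonneg (hv0 x) (pow_nn M hM0 k x i))] at h
  rcases mul_eq_zero.1 (h j (Finset.mem_univ j)) with h | h
  · exact h
  · exact absurd h hk.ne'

lemma stat_unique {n : ℕ} (M : Matrix (Fin n) (Fin n) ℝ) (hM0 : ∀ i j, 0 ≤ M i j)
    (hirr : ∀ i j, ∃ k, 1 ≤ k ∧ 0 < (M ^ k) i j) (v π : Fin n → ℝ)
    (hv : ∀ j, ∑ i, v i * M i j = v j) (hπ0 : ∀ i, 0 ≤ π i) (hπ1 : ∑ i, π i = 1)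
    (hπ : ∀ j, ∑ i, π i * M i j = π j) (i : Fin n) : v i = π i * ∑ j, v j := by
  have hpos : ∀ j, 0 < π j := by
    intro j
    refine lt_of_le_of_ne (hπ0 j) fun h => ?_
    have := Finset.sum_eq_zero (s := univ) fun x _ => stat_zero M hM0 hirr π hπ0 hπ j h.symm x
    rw [this] at hπ1
    norm_num at hπ1
  obtain ⟨a, _, ha⟩ := Finset.exists_min_image univ (fun x => v x / π x) ⟨i, Finset.mem_univ i⟩
  set t := v a / π a with ht
  have key : ∀ j, v j - t * π j = 0 := by
    refine stat_zero M hM0 hirr (fun j => v j - t * π j) ?_ ?_ a ?_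
    · intro j
      have := ha j (Finset.mem_univ j)
      rw [le_div_iff₀ (hpos j)] at this
      linarith
    · intro j
      simp only [sub_mul, Finset.sum_sub_distrib, hv, mul_assoc]
      rw [← Finset.mul_sum, hπ]
    · simp only [ht]
      rw [div_mul_cancel₀ _ (hpos a).ne', sub_self]
  have hvt : ∀ j, v j = t * π j := fun j => by linarith [key j]
  have hs : ∑ j, v j = t := by
    simp_rw [hvt]
    rw [← Finset.mul_sum, hπ1, mul_one]
  rw [hs, hvt i, mul_comm]

lemma uw_pos {n : ℕ} (M : Matrix (Fin n) (Fin n) ℝ) (hM0 : ∀ i j, 0 ≤ M i j)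
    (hM1 : ∀ i, ∑ j, M i j = 1)
    (hirr : ∀ i j, ∃ k, 1 ≤ k ∧ 0 < (M ^ k) i j) (i : Fin n) : 0 < uw M i := by
  have hex : ∀ x, ∃ k, 0 < (M ^ k) x i := fun x => let ⟨k, hk⟩ := hirr x i; ⟨k, hk.2⟩
  let d : Fin n → ℕ := fun x => Nat.find (hex x)
  have hstep : ∀ x, ∃ y, 0 < M x y ∧ (x ≠ i → d y < d x) := by
    intro x
    by_cases hx : x = i
    · have : ∃ y ∈ univ, 0 < M x y := by
        apply Finset.exists_lt_of_sum_lt (f := fun _ => (0 : ℝ))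
        rw [hM1]; simp
      obtain ⟨y, _, hy⟩ := this
      exact ⟨y, hy, fun h => absurd hx h⟩
    · have hs : 0 < (M ^ d x) x i := Nat.find_spec (hex x)
      cases hd : d x with
      | zero => rw [hd, pow_zero, Matrix.one_apply_ne hx] at hs; exact absurd hs (lt_irrefl _)
      | succ k =>
        rw [hd, pow_succ', Matrix.mul_apply] at hs
        have : ∃ y ∈ univ, 0 < M x y * (M ^ k) y i := by
          apply Finset.exists_lt_of_sum_lt (f := fun _ => (0 : ℝ))
          simpa using hs
        obtain ⟨y, _, hy⟩ := this
        refine ⟨y, pos_of_mul_pos_left hy (pow_nn M hM0 k y i), fun _ => ?_⟩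
        have : d y ≤ k := Nat.find_min' (hex y) (pos_of_mul_pos_right hy (hM0 x y))
        omega
  choose α hα1 hα2 using hstep
  have hR : ∀ m x, d x ≤ m → ∃ k, α^[k] x = i := by
    intro m
    induction m with
    | zero =>
      intro x hx
      by_cases h : x = i
      · exact ⟨0, h⟩
      · have := hα2 x h; omega
    | succ m ih =>
      intro x hx
      by_cases h : x = i
      · exact ⟨0, h⟩
      · have := hα2 x h
        obtain ⟨k, hk⟩ := ih (α x) (by omega)
        exact ⟨k + 1, by rwa [Function.iterate_succ_apply]⟩
  rw [uw]
  refine Finset.sum_pos' (fun β _ => ?_) ⟨α, Finset.mem_univ α, ?_⟩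
  · split_ifs
    · exact Finset.prod_nonneg fun x _ => hM0 _ _
    · exact le_rfl
  · have hRα : Rch α i := fun x => hR (d x) x le_rfl
    rw [if_pos hRα]
    exact Finset.prod_pos fun x _ => hα1 x

/-- Cycle weights recover the stationary distribution: for every state i,
Σ_{cycles c = (S,σ), i ∈ S} w_c = π_i, where w_c = Q(α : A(α)=c)/E_Q[‖A(α)‖];
equivalently Q(α single attractor ∧ i ∈ Per α) = π_i · E_Q[‖A(α)‖]. -/
theorem cycle_weights_give_stationary_distribution (n : ℕ)
    (M : Matrix (Fin n) (Fin n) ℝ)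
    (hM0 : ∀ i j, 0 ≤ M i j) (hM1 : ∀ i, ∑ j, M i j = 1)
    (hirr : ∀ i j, ∃ k, 1 ≤ k ∧ 0 < (M ^ k) i j)
    (π : Fin n → ℝ) (hπ0 : ∀ i, 0 ≤ π i) (hπ1 : ∑ i, π i = 1)
    (hπstat : ∀ j, ∑ i, π i * M i j = π j)
    (Q : (Fin n → Fin n) → ℝ) (hQ : ∀ α, Q α = ∏ i, M i (α i))
    (Per : (Fin n → Fin n) → Finset (Fin n))
    (hPer : ∀ α, Per α = Finset.univ.filter fun x => ∃ k, 1 ≤ k ∧ α^[k] x = x)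
    (single : (Fin n → Fin n) → Prop)
    (hsingle : ∀ α, single α ↔ ∀ x ∈ Per α, ∀ y ∈ Per α, ∃ k, α^[k] x = y)
    (normA : (Fin n → Fin n) → ℝ)
    (hnormA : ∀ α, normA α = if single α then ((Per α).card : ℝ) else 0)
    (EQ : ℝ) (hEQ : EQ = ∑ α : Fin n → Fin n, Q α * normA α)
    (wc : Finset (Fin n) → Equiv.Perm (Fin n) → ℝ)
    (hwc : ∀ S σ, wc S σ =
      (∑ α : Fin n → Fin n, if (Per α = S ∧ ∀ x ∈ S, α x = σ x) then Q α else 0) / EQ)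
    (i : Fin n) :
    (∑ S : Finset (Fin n), ∑ σ : Equiv.Perm (Fin n),
      if (S.Nonempty ∧ (∀ x ∉ S, σ x = x) ∧
          (∀ x ∈ S, ∀ y ∈ S, ∃ k, (⇑σ)^[k] x = y) ∧ i ∈ S)
        then wc S σ else 0) = π i ∧
    (∑ α : Fin n → Fin n, if (single α ∧ i ∈ Per α) then Q α else 0) = π i * EQ := by
  have hP : ∀ α x, x ∈ Per α ↔ ∃ k, 1 ≤ k ∧ α^[k] x = x := by
    intro α x; rw [hPer]; simp
  have hR : ∀ α x, (single α ∧ x ∈ Per α) ↔ Rch α x := by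
    intro α x
    rw [Rch_iff, hsingle]
    simp only [hP]
  have hu : ∀ x, (∑ α : Fin n → Fin n, if (single α ∧ x ∈ Per α) then Q α else 0) = uw M x := by
    intro x
    rw [uw]
    refine Finset.sum_congr rfl fun α _ => ?_
    rw [if_congr (hR α x) rfl rfl, hQ]
  have hE : EQ = ∑ x, uw M x := by
    simp_rw [← hu]
    rw [Finset.sum_comm, hEQ]
    refine Finset.sum_congr rfl fun α _ => ?_
    rw [hnormA]
    by_cases hs : single α
    · simp [hs, mul_comm]
    · simp [hs]
  have hmain : uw M i = π i * EQ := by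
    rw [hE]
    exact stat_unique M hM0 hirr (uw M) π (uw_stat M hM1) hπ0 hπ1 hπstat i
  have hEpos : 0 < EQ := by
    rw [hE]
    exact Finset.sum_pos (fun x _ => uw_pos M hM0 hM1 hirr x) ⟨i, Finset.mem_univ i⟩
  refine ⟨?_, by rw [hu, hmain]⟩
  have hcount : ∀ α : Fin n → Fin n, (∑ S : Finset (Fin n), ∑ σ : Equiv.Perm (Fin n),
      if (S.Nonempty ∧ (∀ x ∉ S, σ x = x) ∧
          (∀ x ∈ S, ∀ y ∈ S, ∃ k, (⇑σ)^[k] x = y) ∧ i ∈ S) ∧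
          (Per α = S ∧ ∀ x ∈ S, α x = σ x)
        then Q α else 0) = if (single α ∧ i ∈ Per α) then Q α else 0 := by
    intro α
    have hclosed : ∀ x ∈ Per α, α x ∈ Per α := fun x hx => by
      rw [hP] at hx ⊢; exact per_map hx
    have hiter : ∀ σ : Equiv.Perm (Fin n), (∀ x ∈ Per α, α x = σ x) →
        ∀ k, ∀ x ∈ Per α, α^[k] x = (⇑σ)^[k] x := by
      intro σ h k
      induction k with
      | zero => intro x _; rfl
      | succ k ih =>
        intro x hx
        rw [Function.iterate_succ_apply, Function.iterate_succ_apply, ← h x hx]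
        exact ih _ (hclosed x hx)
    rw [Finset.sum_eq_single (Per α)]
    rotate_left
    · intro S _ hS
      refine Finset.sum_eq_zero fun σ _ => ?_
      rw [if_neg]
      rintro ⟨_, h, _⟩
      exact hS h.symm
    · simp
    by_cases h : single α ∧ i ∈ Per α
    · rw [if_pos h]
      have hinj : Function.Injective (fun x => if x ∈ Per α then α x else x) := by
        intro x y hxy
        simp only at hxy
        split_ifs at hxy with h1 h2 h2
        · rw [hP] at h1 h2
          exact per_inj h1 h2 hxy
        · exact absurd (hxy ▸ hclosed x h1) h2
        · exact absurd (hxy ▸ hclosed y h2) h1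
        · exact hxy
      let τ : Equiv.Perm (Fin n) := Equiv.ofBijective _ (Finite.injective_iff_bijective.1 hinj)
      have hτ : ∀ x, τ x = if x ∈ Per α then α x else x := fun x => rfl
      have hτ1 : ∀ x ∈ Per α, α x = τ x := fun x hx => by rw [hτ, if_pos hx]
      rw [Finset.sum_eq_single τ]
      · rw [if_pos]
        refine ⟨⟨⟨i, h.2⟩, fun x hx => by rw [hτ, if_neg hx], ?_, h.2⟩, rfl, hτ1⟩
        intro x hx y hy
        obtain ⟨k, hk⟩ := (hsingle α).1 h.1 x hx y hy
        exact ⟨k, by rw [← hiter τ hτ1 k x hx, hk]⟩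
      · intro σ _ hσ
        rw [if_neg]
        rintro ⟨⟨_, h1, _⟩, _, h2⟩
        apply hσ
        ext1 x
        rw [hτ]
        split_ifs with hx
        · exact (h2 x hx).symm
        · exact h1 x hx
      · simp
    · rw [if_neg h]
      refine Finset.sum_eq_zero fun σ _ => ?_
      rw [if_neg]
      rintro ⟨⟨_, _, h1, h2⟩, _, h3⟩
      refine h ⟨(hsingle α).2 fun x hx y hy => ?_, h2⟩
      obtain ⟨k, hk⟩ := h1 x hx y hy
      exact ⟨k, by rw [hiter σ h3 k x hx, hk]⟩
  have hfin : (∑ S : Finset (Fin n), ∑ σ : Equiv.Perm (Fin n),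
      if (S.Nonempty ∧ (∀ x ∉ S, σ x = x) ∧
          (∀ x ∈ S, ∀ y ∈ S, ∃ k, (⇑σ)^[k] x = y) ∧ i ∈ S)
        then wc S σ else 0) = uw M i / EQ := by
    rw [← hu]
    simp_rw [← hcount]
    conv_rhs => rw [Finset.sum_comm, Finset.sum_div]
    refine Finset.sum_congr rfl fun S _ => ?_
    conv_rhs => rw [Finset.sum_comm, Finset.sum_div]
    refine Finset.sum_congr rfl fun σ _ => ?_
    by_cases hc : (S.Nonempty ∧ (∀ x ∉ S, σ x = x) ∧
          (∀ x ∈ S, ∀ y ∈ S, ∃ k, (⇑σ)^[k] x = y) ∧ i ∈ S)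
    · rw [if_pos hc, hwc]
      refine congrArg (fun t : ℝ => t / EQ) (Finset.sum_congr rfl fun α _ => ?_)
      exact if_congr (by rw [and_iff_right hc]) rfl rfl
    · rw [if_neg hc]
      symm
      refine div_eq_zero_iff.2 (Or.inl (Finset.sum_eq_zero fun α _ => ?_))
      exact if_neg (fun h => hc h.1)
  rw [hfin, hmain, mul_div_cancel_right₀ _ hEpos.ne']
end
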